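/- Let X be a metric space, x₀ ∈ X. For ε > 0 define λ_ε(x₀) as the supremum of reals l ≤ 1 such that there exists an ε-chain (x_0', ..., x_n') in X containing x₀ with d(x_0', x_n') ≥ l, and λ(x₀) = inf over ε > 0 of λ_ε(x₀). If X is countable and λ(x₀) > 0 for some x₀ ∈ X, then X is divisible: there exists a partition of X into two pieces neither of which contains an isometric copy of X. -/

import Mathlib

/-- The set of reals `l ≤ 1` such that there is an `ε`-chain containing `x₀` whose
endpoints are at distance at least `l`. -/
def chainLengths {X : Type*} [MetricSpace X] (x₀ : X) (ε : ℝ) : Set ℝ :=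
  {l | l ≤ 1 ∧ ∃ (n : ℕ) (c : ℕ → X),
    (∀ i < n, dist (c i) (c (i + 1)) ≤ ε) ∧ (∃ i ≤ n, c i = x₀) ∧
    l ≤ dist (c 0) (c n)}

/-!
Let `0 < r < λ(x₀) / 2`, so that chains of arbitrarily small steps lead from `x₀` to points at
distance at least `r`. Partition the space into countably many open cells whose points are at mutual
distance `< r`, and let `g x` be the distance from `x` to the other cells, a positive `1`-Lipschitz
function. Each of these chains has to leave the cell of `x₀`, and just before it does so `g` is at
most the step size. As `g` changes by no more than the step size at each step, it cannot jump over
the dyadic interval directly below the one containing `g x₀`. The same holds for the image of the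
chain under an isometry, so colouring points by the parity of `⌊log₂ g⌋` gives every isometric copy
both colours.
-/

open Set TopologicalSpace

section Chains

variable {X : Type*} [PseudoMetricSpace X] {ε : ℝ}

/-- Two points are `ε`-chain joined if they are the endpoints of an `ε`-chain. Chains are encoded by
the reflexive transitive closure of the relation `dist x y ≤ ε`. -/
def ChainJoined (ε : ℝ) : X → X → Prop :=
  Relation.ReflTransGen fun x y => dist x y ≤ ε

theorem ChainJoined.of_succ_le {c : ℕ → X} {n i j : ℕ} (hc : ∀ k < n, dist (c k) (c (k + 1)) ≤ ε)
    (hi : i ≤ n) (hj : j ≤ n) : ChainJoined ε (c i) (c j) := by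
  refine Relation.ReflTransGen.lift c (fun _ _ h => h) i j <|
    reflTransGen_of_succ (fun k l => dist (c k) (c l) ≤ ε) (fun k hk => ?_) fun k hk => ?_
  · exact hc k (hk.2.trans_le hj)
  · rw [dist_comm]
    exact hc k (hk.2.trans_le hi)

/-- For every `ε > 0` some `ε`-chain starting at `x` ends at distance at least `r` from `x`. This
replaces `λ(x) > 0`, the chains in `λ(x)` being allowed to pass through `x`. -/
def HasLongChains (r : ℝ) (x : X) : Prop :=
  ∀ ε > 0, ∃ y, ChainJoined ε x y ∧ r ≤ dist x y

end Chains

namespace chainLengths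

variable {X : Type*} [MetricSpace X] {x₀ : X} {ε l : ℝ}

theorem zero_mem : 0 ∈ chainLengths x₀ ε :=
  ⟨zero_le_one, 0, fun _ => x₀, by simp, ⟨0, le_rfl, rfl⟩, dist_nonneg⟩

theorem exists_chainJoined (hl : l ∈ chainLengths x₀ ε) :
    ∃ y, ChainJoined ε x₀ y ∧ l / 2 ≤ dist x₀ y := by
  obtain ⟨-, n, c, hc, ⟨i, hi, rfl⟩, hl⟩ := hl
  have htri : dist (c 0) (c n) ≤ dist (c i) (c 0) + dist (c i) (c n) := dist_triangle_left ..
  rcases le_total (l / 2) (dist (c i) (c n)) with hn | hn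
  · exact ⟨c n, .of_succ_le hc hi le_rfl, hn⟩
  · exact ⟨c 0, .of_succ_le hc hi n.zero_le, by linarith⟩

theorem exists_hasLongChains (h : 0 < ⨅ ε : {e : ℝ // 0 < e}, sSup (chainLengths x₀ ε.1)) :
    ∃ r > 0, HasLongChains r x₀ := by
  obtain ⟨l, hl₀, hl⟩ := exists_between h
  refine ⟨l / 2, half_pos hl₀, fun ε hε => ?_⟩
  have hbdd : BddBelow (range fun ε : {e : ℝ // 0 < e} => sSup (chainLengths x₀ ε.1)) :=
    ⟨0, forall_mem_range.2 fun _ => Real.sSup_nonneg' ⟨0, zero_mem, le_rfl⟩⟩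
  obtain ⟨l', hl', hll'⟩ :=
    exists_lt_of_lt_csSup ⟨0, zero_mem⟩ (hl.trans_le (ciInf_le hbdd ⟨ε, hε⟩))
  obtain ⟨y, hy, hdist⟩ := exists_chainJoined hl'
  exact ⟨y, hy, by linarith⟩

end chainLengths

section ClopenCells

variable {X : Type*}

theorem isLocallyConstant_find_of_isClopen [TopologicalSpace X] {U : ℕ → Set X}
    [∀ x, DecidablePred fun n => x ∈ U n] (hU : ∀ n, IsClopen (U n)) (hcov : ∀ x, ∃ n, x ∈ U n) :
    IsLocallyConstant fun x => Nat.find (hcov x) := by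
  refine IsLocallyConstant.iff_isOpen_fiber.2 fun n => ?_
  have hfiber : (fun x => Nat.find (hcov x)) ⁻¹' {n} = disjointed U n :=
    preimage_find_eq_disjointed U hcov n
  rw [hfiber]
  exact (disjointedRec (fun _ i ht => ht.diff (hU i)) (hU n)).isOpen

theorem exists_isLocallyConstant_dist_lt [PseudoMetricSpace X] [LindelofSpace X]
    (hX : IsTopologicalBasis {s : Set X | IsClopen s}) {r : ℝ} (hr : 0 < r) :
    ∃ p : X → ℕ, IsLocallyConstant p ∧ ∀ x y, p x = p y → dist x y < r := by
  classical
  rcases isEmpty_or_nonempty X with _ | _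
  · exact ⟨fun _ => 0, .const 0, isEmptyElim⟩
  have hsmall (x : X) : ∃ U, IsClopen U ∧ x ∈ U ∧ U ⊆ Metric.ball x (r / 2) :=
    hX.mem_nhds_iff.1 (Metric.ball_mem_nhds x (half_pos hr))
  choose U hU hxU hUball using hsmall
  obtain ⟨f, hf⟩ := isLindelof_univ.indexed_countable_subcover U (fun x => (hU x).isOpen)
    fun x _ => mem_iUnion.2 ⟨x, hxU x⟩
  have hcov (x : X) : ∃ n, x ∈ U (f n) := mem_iUnion.1 (hf (mem_univ x))
  refine ⟨_, isLocallyConstant_find_of_isClopen (fun n => hU (f n)) hcov, fun x y hxy => ?_⟩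
  have hx := Metric.mem_ball.1 (hUball _ (Nat.find_spec (hcov x)))
  have hy := Metric.mem_ball.1 (hUball _ (Nat.find_spec (hcov y)))
  rw [← hxy] at hy
  exact (dist_triangle_right ..).trans_lt (add_halves r ▸ add_lt_add hx hy)

end ClopenCells

section GapFunctions

variable {X Y ι : Type*} [PseudoMetricSpace X] [PseudoMetricSpace Y]

/-- For a partition of `X` into the fibres of `p`, a gap function `g` is a positive `1`-Lipschitz
lower bound for the distance of a point to the fibres not containing it. -/
structure IsGapFunction (p : X → ι) (g : X → ℝ) : Prop where
  pos : ∀ x, 0 < g x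
  lipschitz : LipschitzWith 1 g
  eq_of_dist_lt : ∀ ⦃x y⦄, dist x y < g x → p y = p x

theorem exists_isGapFunction {p : X → ι} (hp : IsLocallyConstant p) : ∃ g, IsGapFunction p g := by
  by_cases hconst : ∀ x y, p y = p x
  · exact ⟨fun _ => 1, fun _ => one_pos, (LipschitzWith.const 1).weaken zero_le_one,
      fun x y _ => hconst x y⟩
  have hne (x : X) : {y | p y ≠ p x}.Nonempty := by
    by_contra! hempty
    have heq (y : X) : p y = p x := not_not.1 (eq_empty_iff_forall_notMem.1 hempty y)
    exact hconst fun y z => (heq z).trans (heq y).symm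
  have hpos (x : X) : 0 < Metric.infDist x {y | p y ≠ p x} := by
    have hclosed : IsClosed {y | p y ≠ p x} := (hp.isOpen_fiber (p x)).isClosed_compl
    exact (hclosed.notMem_iff_infDist_pos (hne x)).1 fun hx => hx rfl
  refine ⟨fun x => Metric.infDist x {y | p y ≠ p x}, hpos, .of_le_add fun x y => ?_,
    fun x y hlt => ?_⟩
  · by_cases hxy : p y = p x
    · simp only [hxy]
      exact Metric.infDist_le_infDist_add_dist
    · exact (Metric.infDist_le_dist_of_mem hxy).trans (le_add_of_nonneg_left (hpos y).le)
  · exact not_not.1 fun hxy => hlt.not_ge (Metric.infDist_le_dist_of_mem hxy)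

namespace IsGapFunction

variable {p : X → ι} {g : X → ℝ} {x y : X} {b ε r : ℝ}

theorem comp_isometry {p : Y → ι} {g : Y → ℝ} (hg : IsGapFunction p g) {e : X → Y}
    (he : Isometry e) : IsGapFunction (p ∘ e) (g ∘ e) where
  pos x := hg.pos (e x)
  lipschitz := by simpa using hg.lipschitz.comp he.lipschitz
  eq_of_dist_lt x y h := hg.eq_of_dist_lt (by rwa [he.dist_eq])

theorem le_and_eq_of_chainJoined (hg : IsGapFunction p g) (hε : ε < b)
    (hskip : ∀ z, g z ∉ Ico (b - ε) b) (hx : b ≤ g x) (hxy : ChainJoined ε x y) :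
    b ≤ g y ∧ p y = p x := by
  induction hxy with
  | refl => exact ⟨hx, rfl⟩
  | @tail y z _ hyz ih =>
    obtain ⟨hy, hpy⟩ := ih
    have hz : b - ε ≤ g z := by
      have := hg.lipschitz.le_add_mul y z
      simp only [NNReal.coe_one, one_mul] at this
      linarith
    have hpz : p z = p y := hg.eq_of_dist_lt (by linarith)
    exact ⟨le_of_not_gt fun hzb => hskip z ⟨hz, hzb⟩, hpz.trans hpy⟩

theorem exists_mem_Ico (hg : IsGapFunction p g) (hp : ∀ x y, p x = p y → dist x y < r)
    (hx : HasLongChains r x) (hε : 0 < ε) (hεb : ε < b) (hb : b ≤ g x) :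
    ∃ z, g z ∈ Ico (b - ε) b := by
  by_contra! hskip
  obtain ⟨y, hxy, hr⟩ := hx ε hε
  have hpy : p y = p x := (hg.le_and_eq_of_chainJoined hεb hskip hb hxy).2
  exact (hp x y hpy.symm).not_ge hr

theorem exists_log_eq_sub_one (hg : IsGapFunction p g) (hp : ∀ x y, p x = p y → dist x y < r)
    (hx : HasLongChains r x) : ∃ z, Int.log 2 (g z) = Int.log 2 (g x) - 1 := by
  set k := Int.log 2 (g x)
  have hk : (2 : ℝ) ^ k ≤ g x := mod_cast Int.zpow_log_le_self one_lt_two (hg.pos x)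
  have hhalf : (2 : ℝ) ^ k - 2 ^ (k - 1) = 2 ^ (k - 1) := by
    rw [zpow_sub_one₀ two_ne_zero]
    ring
  obtain ⟨z, hlow, hup⟩ := hg.exists_mem_Ico hp hx (ε := 2 ^ (k - 1)) (by positivity)
    (zpow_lt_zpow_right₀ one_lt_two (sub_one_lt k)) hk
  rw [hhalf] at hlow
  have hlog_ge : k - 1 ≤ Int.log 2 (g z) :=
    (Int.zpow_le_iff_le_log one_lt_two (hg.pos z)).1 (mod_cast hlow)
  have hlog_lt : Int.log 2 (g z) < k :=
    (Int.lt_zpow_iff_log_lt one_lt_two (hg.pos z)).1 (mod_cast hup)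
  exact ⟨z, by lia⟩

end IsGapFunction

end GapFunctions

theorem lambda_positive_implies_divisible_general {X Y : Type*} [MetricSpace X]
    [PseudoMetricSpace Y] [LindelofSpace Y] (hY : IsTopologicalBasis {s : Set Y | IsClopen s})
    (x₀ : X) (h : 0 < ⨅ ε : {e : ℝ // 0 < e}, sSup (chainLengths x₀ ε.1)) :
    ∃ A : Set Y,
      ¬ (∃ e : X → Y, Isometry e ∧ range e ⊆ A) ∧
      ¬ (∃ e : X → Y, Isometry e ∧ range e ⊆ Aᶜ) := by
  obtain ⟨r, hr, hlong⟩ := chainLengths.exists_hasLongChains h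
  obtain ⟨p, hp, hmesh⟩ := exists_isLocallyConstant_dist_lt hY hr
  obtain ⟨g, hg⟩ := exists_isGapFunction hp
  have hparity (e : X → Y) (he : Isometry e) :
      ∃ z, Even (Int.log 2 (g (e z))) ↔ ¬ Even (Int.log 2 (g (e x₀))) := by
    obtain ⟨z, hz⟩ := (hg.comp_isometry he).exists_log_eq_sub_one
      (fun x y hxy => he.dist_eq x y ▸ hmesh _ _ hxy) hlong
    simp only [Function.comp_apply] at hz
    exact ⟨z, hz ▸ Int.even_sub_one⟩
  refine ⟨{y | Even (Int.log 2 (g y))}, ?_, ?_⟩ <;> rintro ⟨e, he, hsub⟩ <;>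
    obtain ⟨z, hz⟩ := hparity e he
  · exact hz.1 (hsub (mem_range_self z)) (hsub (mem_range_self x₀))
  · exact hsub (mem_range_self z) (hz.2 (hsub (mem_range_self x₀)))

/-- If `X` is a countable metric space and `λ(x₀) = inf_{ε > 0} λ_ε(x₀) > 0` for some
`x₀ ∈ X`, where `λ_ε(x₀)` is the supremum of lengths of `ε`-chains through `x₀`,
then `X` is divisible: some partition of `X` into two pieces is such that neither
piece contains an isometric copy of `X`. -/
theorem lambda_positive_implies_divisible {X : Type*} [MetricSpace X] [Countable X]
    (x₀ : X)
    (h : 0 < ⨅ ε : {e : ℝ // 0 < e}, sSup (chainLengths x₀ ε.1)) :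
    ∃ A : Set X,
      ¬ (∃ e : X → X, Isometry e ∧ Set.range e ⊆ A) ∧
      ¬ (∃ e : X → X, Isometry e ∧ Set.range e ⊆ Aᶜ) := by
  have hcard : Cardinal.mk X < Cardinal.continuum :=
    Cardinal.mk_le_aleph0.trans_lt Cardinal.aleph0_lt_continuum
  exact lambda_positive_implies_divisible_general
    (CompletelyRegularSpace.isTopologicalBasis_clopens_of_cardinalMk_lt_continuum hcard) x₀ h
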